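/- arXiv:1101.3948 — 2 statements merged into one kernel-verified Lean document; each statement's English description precedes it below -/
import Mathlib

section
/- Let n, k, m be positive integers with k ≥ n+1. Then Σ_{∅≠J⊆{1,…,n}} (−1)^{|J|−1} S(k, m, J) = 1/m^k. -/
open Finset

/-- `PS p j` is the partial sum `p₁ + ⋯ + p_j` of the positive integers
`pᵢ = p (i-1) + 1` encoded by `p : Fin N → ℕ`. -/
def PS {N : ℕ} (p : Fin N → ℕ) (j : ℕ) : ℕ :=
  ∑ i ∈ Finset.univ.filter (fun i : Fin N => (i : ℕ) < j), (p i + 1)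

/-- `Ikr n k r` is the set `I(k,r)` of tuples `(k₁,…,kₙ)` of positive integers with
`kₙ ≥ 2`, `k₁ + ⋯ + kₙ = k` and `k₁ = ⋯ = k_{r-1} = 1`; the tuple is encoded as
`kv : Fin n → ℕ` with `k_j = kv (j-1)`. -/
def Ikr (n k r : ℕ) : Finset (Fin n → ℕ) :=
  (Fintype.piFinset fun _ : Fin n => Finset.range (k + 1)).filter fun kv =>
    (∀ i, 1 ≤ kv i) ∧ (∀ i : Fin n, (i : ℕ) = n - 1 → 2 ≤ kv i) ∧
      (∑ i, kv i) = k ∧ ∀ i : Fin n, (i : ℕ) + 2 ≤ r → kv i = 1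

/-- `S n k m J` is the quantity `S(k,m,J)`: the sum over `𝐤 ∈ I(k, max J)` and over
tuples `𝐦` of positive integers with `∑_{j∈J} m_j = m` of
`1/(m₁^{k₁}(m₁+m₂)^{k₂}⋯(m₁+⋯+mₙ)^{kₙ})`. -/
noncomputable def S (n k m : ℕ) (J : Finset (Fin n)) : ℝ :=
  ∑ kv ∈ Ikr n k (J.sup fun j => (j : ℕ) + 1),
    ∑' mv : {mv : Fin n → ℕ // (∑ j ∈ J, (mv j + 1)) = m},
      (∏ i : Fin n, ((PS mv.val ((i : ℕ) + 1) : ℕ) : ℝ) ^ kv i)⁻¹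

/-!
Truncate all sums at a bound `M` on the largest partial sum, let a variable `x` mark the constraint
`∑_{j ∈ J} m_j = m` and let `z` mark the depth `n`, with the excess `d` of the weight over the depth
fixed. Splitting off the first entry of the tuples yields two linear recursions. The alternating
sums `Φ q`, in which all partial sums are offset by `q`, satisfy
`Φ q = z * ∑ p ∈ Ioc q M, (x ^ (p - q) * Q p + (1 - x ^ (p - q)) * (Φ p / p))`, where `Q p` collects
the sums with first partial sum `p`; and `p * Q p = Q' p + z * ∑ q ∈ Ioc p M, Q q`, where `Q'`
belongs to `d - 1`.

The coefficients of `((1 - x t) / (1 - t)) ^ z` in `t` are weights that cancel every `Φ p` with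
`p > 0` from the first recursion, which leaves
`[x ^ m] Φ 0 = z * multichoose (1 - z) (m - 1) * ∑ p ∈ Icc m M, multichoose z (p - m) * Q p`.
The weights `multichoose z (p - m)` collapse the second recursion: lowering `d` by one costs a
factor `m⁻¹`. What remains is `∑ j, multichoose z j / (j + m)`, which satisfies a first order
recurrence in `m` up to a boundary term that vanishes as `M → ∞`. Solving it gives the limit
`[x ^ m] Φ 0 → z / (m ^ d * (m - z))`, whose coefficient at `z ^ n` is `1 / m ^ k`.
-/

section Multichoose
open Ring

variable {R : Type*} [CommRing R] [BinomialRing R]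

theorem succ_mul_multichoose_succ (r : R) (n : ℕ) :
    ((n + 1 : ℕ) : R) * multichoose r (n + 1) = (r + n) * multichoose r n := by
  have := BinomialRing.toIsAddTorsionFree (R := R)
  refine nsmul_right_injective n.factorial_ne_zero ?_
  have hsucc := factorial_nsmul_multichoose_eq_ascPochhammer r (n + 1)
  have hn := factorial_nsmul_multichoose_eq_ascPochhammer r n
  simp only [Polynomial.ascPochhammer_smeval_eq_eval, ascPochhammer_succ_eval,
    nsmul_eq_mul] at hsucc hn ⊢
  rw [Nat.factorial_succ, Nat.cast_mul] at hsucc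
  linear_combination hsucc - (r + n) * hn

theorem natCast_mul_multichoose (r : R) (n : ℕ) :
    (n : R) * multichoose r n = r * ∑ i ∈ range n, multichoose r i := by
  induction n with
  | zero => simp
  | succ n ih =>
    rw [succ_mul_multichoose_succ, sum_range_succ]
    linear_combination ih

theorem sum_range_succ_multichoose (r : R) (n : ℕ) :
    ∑ i ∈ range (n + 1), multichoose r i = multichoose (r + 1) n := by
  induction n with
  | zero => simp
  | succ n ih => rw [sum_range_succ, ih, multichoose_succ_succ, add_comm]

theorem mul_sum_multichoose_mul_of_rec (m M : ℕ) (z : R) (Q Q' : ℕ → R)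
    (hQ : ∀ p ∈ Icc m M, (p : R) * Q p = Q' p + z * ∑ q ∈ Ioc p M, Q q) :
    (m : R) * ∑ p ∈ Icc m M, multichoose z (p - m) * Q p =
      ∑ p ∈ Icc m M, multichoose z (p - m) * Q' p := by
  have hswap : ∑ p ∈ Icc m M, multichoose z (p - m) * (z * ∑ q ∈ Ioc p M, Q q) =
      ∑ q ∈ Icc m M, (z * ∑ p ∈ Ico m q, multichoose z (p - m)) * Q q := by
    simp only [mul_sum, sum_mul]
    rw [sum_comm' (t' := Icc m M) (s' := fun q ↦ Ico m q)]
    · exact sum_congr rfl fun q _ ↦ sum_congr rfl fun p _ ↦ by ring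
    · intro p q
      simp only [mem_Icc, mem_Ioc, mem_Ico]
      omega
  have hcollapse : ∑ q ∈ Icc m M, (z * ∑ p ∈ Ico m q, multichoose z (p - m)) * Q q =
      ∑ q ∈ Icc m M, ((q : R) - m) * multichoose z (q - m) * Q q := by
    refine sum_congr rfl fun q hq ↦ ?_
    rw [sum_Ico_eq_sum_range]
    simp only [Nat.add_sub_cancel_left]
    rw [← natCast_mul_multichoose, Nat.cast_sub (mem_Icc.1 hq).1]
  have hexpand : ∑ p ∈ Icc m M, multichoose z (p - m) * ((p : R) * Q p) =
      ∑ p ∈ Icc m M, multichoose z (p - m) * (Q' p + z * ∑ q ∈ Ioc p M, Q q) :=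
    sum_congr rfl fun p hp ↦ by rw [hQ p hp]
  simp only [mul_add, sum_add_distrib, hswap, hcollapse] at hexpand
  rw [← sub_eq_iff_eq_add, ← sum_sub_distrib] at hexpand
  rw [← hexpand, mul_sum]
  exact sum_congr rfl fun p _ ↦ by ring

end Multichoose

section Kernel
open Ring PowerSeries

variable {R : Type*} [CommRing R]

theorem coeff_X_mul_derivative (f : R⟦X⟧) (n : ℕ) :
    coeff n (X * derivative R f) = n * coeff n f := by
  cases n with
  | zero => simp
  | succ n => rw [coeff_succ_X_mul]; simp [coeff_derivative, mul_comm]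

theorem coeff_X_mul_mk_pow_mul (x : R) (f : R⟦X⟧) (n : ℕ) :
    coeff n (X * PowerSeries.mk (fun i ↦ x ^ (i + 1)) * f) =
      ∑ q ∈ range n, x ^ (n - q) * coeff q f := by
  rcases n with _ | n
  · simp
  rw [mul_assoc, coeff_succ_X_mul, mul_comm, coeff_mul,
    Finset.Nat.sum_antidiagonal_eq_sum_range_succ_mk]
  refine sum_congr rfl fun q hq ↦ ?_
  rw [coeff_mk, mul_comm, Nat.sub_add_comm (mem_range_succ_iff.1 hq)]

variable [BinomialRing R]

/-- The power series `(1 - x t) ^ (-z)` in the variable `t`, for an arbitrary exponent `z`. -/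
noncomputable def multichooseSeries (z x : R) : R⟦X⟧ :=
  PowerSeries.mk fun n ↦ x ^ n * multichoose z n

theorem X_mul_derivative_multichooseSeries (z x : R) :
    X * derivative R (multichooseSeries z x) =
      C z * (X * PowerSeries.mk (fun i ↦ x ^ (i + 1)) * multichooseSeries z x) := by
  ext n
  rw [coeff_X_mul_derivative, coeff_C_mul, coeff_X_mul_mk_pow_mul]
  simp only [multichooseSeries, coeff_mk]
  rw [mul_left_comm, natCast_mul_multichoose, mul_left_comm, mul_sum]
  congr 1
  refine sum_congr rfl fun q hq ↦ ?_
  rw [← mul_assoc, ← pow_add, Nat.sub_add_cancel (mem_range.1 hq).le]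

/-- The power series `((1 - x t) / (1 - t)) ^ z` in the variable `t`. Its coefficients are the
weights that decouple the recursion in `eq_sum_multichoose_of_rec`. -/
noncomputable def ratioSeries (z x : R) : R⟦X⟧ :=
  multichooseSeries z 1 * multichooseSeries (-z) x

theorem natCast_mul_coeff_ratioSeries (z x : R) (p : ℕ) :
    (p : R) * coeff p (ratioSeries z x) =
      z * ∑ q ∈ range p, (1 - x ^ (p - q)) * coeff q (ratioSeries z x) := by
  have hode : X * derivative R (ratioSeries z x) =
      C z * (X * PowerSeries.mk (fun i ↦ 1 ^ (i + 1)) * ratioSeries z x -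
        X * PowerSeries.mk (fun i ↦ x ^ (i + 1)) * ratioSeries z x) := by
    have hnum := X_mul_derivative_multichooseSeries (-z) x
    have hden := X_mul_derivative_multichooseSeries z 1
    rw [map_neg] at hnum
    rw [ratioSeries, Derivation.leibniz, smul_eq_mul, smul_eq_mul]
    linear_combination multichooseSeries z 1 * hnum + multichooseSeries (-z) x * hden
  rw [← coeff_X_mul_derivative, hode, coeff_C_mul, map_sub, coeff_X_mul_mk_pow_mul,
    coeff_X_mul_mk_pow_mul, ← sum_sub_distrib]
  simp only [one_pow, sub_mul]

theorem sum_pow_mul_coeff_ratioSeries (z x : R) (p : ℕ) :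
    ∑ q ∈ range p, x ^ (p - q) * coeff q (ratioSeries z x) =
      ∑ m ∈ range p, x ^ (m + 1) * multichoose (1 - z) m * multichoose z (p - (m + 1)) := by
  have hnum : X * PowerSeries.mk (fun i ↦ x ^ (i + 1)) * multichooseSeries (-z) x =
      X * PowerSeries.mk fun m ↦ x ^ (m + 1) * multichoose (1 - z) m := by
    ext n
    rw [coeff_X_mul_mk_pow_mul]
    rcases n with _ | n
    · simp
    rw [coeff_succ_X_mul, coeff_mk, sub_eq_neg_add, ← sum_range_succ_multichoose, mul_sum]
    refine sum_congr rfl fun q hq ↦ ?_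
    rw [multichooseSeries, coeff_mk, ← mul_assoc, ← pow_add,
      Nat.sub_add_cancel (mem_range.1 hq).le]
  rw [← coeff_X_mul_mk_pow_mul, ratioSeries, mul_left_comm, hnum, mul_left_comm]
  rcases p with _ | p
  · simp
  rw [coeff_succ_X_mul, mul_comm, coeff_mul, Finset.Nat.sum_antidiagonal_eq_sum_range_succ_mk]
  simp [multichooseSeries]

theorem eq_sum_multichoose_of_rec (x z : R) (M : ℕ) (F G Q : ℕ → R)
    (hG : ∀ p ∈ Ioc 0 M, F p = p * G p)
    (hF : ∀ q ≤ M, F q = z * ∑ p ∈ Ioc q M, (x ^ (p - q) * Q p + (1 - x ^ (p - q)) * G p)) :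
    F 0 = z * ∑ m ∈ range M, x ^ (m + 1) * multichoose (1 - z) m *
      ∑ p ∈ Icc (m + 1) M, multichoose z (p - (m + 1)) * Q p := by
  set u : ℕ → R := fun q ↦ coeff q (ratioSeries z x) with hu
  have hu_zero : u 0 = 1 := by simp [hu, ratioSeries, multichooseSeries]
  have hrange : range (M + 1) = insert 0 (Ioc 0 M) := by
    ext
    simp only [mem_range, mem_insert, mem_Ioc]
    omega
  have hsplit : ∑ q ∈ range (M + 1), u q * F q = F 0 + ∑ p ∈ Ioc 0 M, u p * F p := by
    rw [hrange, sum_insert (by simp), hu_zero, one_mul]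
  have hpair : ∑ q ∈ range (M + 1), u q * F q =
      z * ∑ p ∈ Ioc 0 M, (∑ q ∈ range p, x ^ (p - q) * u q) * Q p +
        ∑ p ∈ Ioc 0 M, u p * F p := by
    calc ∑ q ∈ range (M + 1), u q * F q
        = ∑ q ∈ range (M + 1), ∑ p ∈ Ioc q M,
            z * (x ^ (p - q) * u q * Q p + (1 - x ^ (p - q)) * u q * G p) := by
          refine sum_congr rfl fun q hq ↦ ?_
          rw [hF q (mem_range_succ_iff.1 hq), mul_sum, mul_sum]
          exact sum_congr rfl fun p _ ↦ by ring
      _ = ∑ p ∈ Ioc 0 M, ∑ q ∈ range p,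
            z * (x ^ (p - q) * u q * Q p + (1 - x ^ (p - q)) * u q * G p) := by
          refine sum_comm' fun q p ↦ ?_
          simp only [mem_range, mem_Ioc]
          omega
      _ = _ := by
          rw [mul_sum, ← sum_add_distrib]
          refine sum_congr rfl fun p hp ↦ ?_
          rw [← mul_sum, sum_add_distrib, ← sum_mul, ← sum_mul, hG p hp]
          linear_combination -(G p) * natCast_mul_coeff_ratioSeries z x p
  have hF_zero : F 0 = z * ∑ p ∈ Ioc 0 M, (∑ q ∈ range p, x ^ (p - q) * u q) * Q p := by
    linear_combination hpair - hsplit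
  simp only [hF_zero, hu, sum_pow_mul_coeff_ratioSeries, sum_mul, mul_sum]
  rw [sum_comm' (t' := range M) (s' := fun m ↦ Icc (m + 1) M)]
  · exact sum_congr rfl fun m _ ↦ sum_congr rfl fun p _ ↦ by ring
  · intro p m
    simp only [mem_range, mem_Ioc, mem_Icc]
    omega

end Kernel

section Limit
open Filter PowerSeries Ring
open scoped Topology PowerSeries.WithPiTopology

theorem tendsto_multichoose_X :
    Tendsto (fun L : ℕ ↦ multichoose (X : ℝ⟦X⟧) L) atTop (𝓝 0) := by
  rw [WithPiTopology.tendsto_iff_coeff_tendsto]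
  intro s
  rw [map_zero]
  induction s with
  | zero =>
    refine tendsto_const_nhds.congr' ?_
    filter_upwards [eventually_gt_atTop 0] with L hL
    have h := congrArg (coeff 0) (natCast_mul_multichoose (X : ℝ⟦X⟧) L)
    rw [← map_natCast (C (R := ℝ)), coeff_C_mul, coeff_zero_X_mul] at h
    exact ((mul_eq_zero_iff_left (Nat.cast_ne_zero.2 hL.ne')).1 h).symm
  | succ s ih =>
    refine ih.cesaro.congr' ?_
    filter_upwards [eventually_gt_atTop 0] with L hL
    have h := congrArg (coeff (s + 1)) (natCast_mul_multichoose (X : ℝ⟦X⟧) L)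
    rw [← map_natCast (C (R := ℝ)), coeff_C_mul, coeff_succ_X_mul, map_sum] at h
    rw [← h, inv_mul_cancel_left₀ (Nat.cast_ne_zero.2 hL.ne')]

/-- The partial sums of `∑ⱼ multichoose X j / (j + m)`. They diverge coefficientwise, but not after
multiplication by `multichoose (1 - X) (m - 1)`. -/
noncomputable def multichooseDivSum (m L : ℕ) : ℝ⟦X⟧ :=
  ∑ j ∈ range L, C (((j + m : ℕ) : ℝ)⁻¹) * multichoose X j

theorem natCast_mul_C_inv {K : Type*} [Field K] [CharZero K] {n : ℕ} (hn : n ≠ 0) :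
    (n : K⟦X⟧) * C ((n : K)⁻¹) = 1 := by
  rw [← map_natCast (C (R := K)), ← map_mul, mul_inv_cancel₀ (Nat.cast_ne_zero.2 hn), map_one]

theorem one_sub_X_mul_multichooseDivSum_one (L : ℕ) :
    (1 - X) * multichooseDivSum 1 L = 1 - multichoose X L := by
  induction L with
  | zero => simp [multichooseDivSum]
  | succ L ih =>
    have hinv := natCast_mul_C_inv (K := ℝ) L.succ_ne_zero
    have hrec := succ_mul_multichoose_succ (X : ℝ⟦X⟧) L
    rw [multichooseDivSum, sum_range_succ, mul_add, ← multichooseDivSum, ih]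
    push_cast at hinv hrec ⊢
    linear_combination C ((L + 1 : ℝ)⁻¹) * hrec -
      (multichoose X (L + 1) - multichoose X L) * hinv

theorem sub_X_mul_multichooseDivSum_succ {m : ℕ} (hm : m ≠ 0) (L : ℕ) :
    ((m : ℝ⟦X⟧) + 1 - X) * multichooseDivSum (m + 1) L =
      (m : ℝ⟦X⟧) * multichooseDivSum m L -
        (L : ℝ⟦X⟧) * C (((L + m : ℕ) : ℝ)⁻¹) * multichoose X L := by
  induction L with
  | zero => simp [multichooseDivSum]
  | succ L ih =>
    have hinv := natCast_mul_C_inv (K := ℝ) (n := L + m) (by omega)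
    have hinv_succ := natCast_mul_C_inv (K := ℝ) (n := L + (m + 1)) (by omega)
    have hrec := succ_mul_multichoose_succ (X : ℝ⟦X⟧) L
    rw [multichooseDivSum, multichooseDivSum, sum_range_succ, sum_range_succ, mul_add, mul_add,
      ← multichooseDivSum, ← multichooseDivSum, ih, Nat.add_right_comm]
    push_cast at hinv hinv_succ hrec ⊢
    rw [add_assoc (L : ℝ)]
    linear_combination C ((L + (m + 1) : ℝ)⁻¹) * hrec - multichoose X L * hinv +
      multichoose X L * hinv_succ

theorem tendsto_multichoose_mul_sub_X_mul_multichooseDivSum (m : ℕ) :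
    Tendsto (fun L ↦ multichoose (1 - X) m * (((m : ℝ⟦X⟧) + 1 - X) * multichooseDivSum (m + 1) L))
      atTop (𝓝 1) := by
  induction m with
  | zero =>
    simpa [one_sub_X_mul_multichooseDivSum_one] using tendsto_multichoose_X.const_sub 1
  | succ m ih =>
    have hrest : Tendsto (fun L : ℕ ↦ multichoose (1 - X) (m + 1) *
        ((L : ℝ⟦X⟧) * C (((L + (m + 1) : ℕ) : ℝ)⁻¹) * multichoose X L)) atTop (𝓝 0) := by
      have hC : Tendsto (fun L : ℕ ↦ (L : ℝ⟦X⟧) * C (((L + (m + 1) : ℕ) : ℝ)⁻¹)) atTop (𝓝 1) := by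
        have hdiv := tendsto_natCast_div_add_atTop ((m + 1 : ℕ) : ℝ)
        simpa [Function.comp_def, div_eq_mul_inv] using
          ((WithPiTopology.continuous_C (R := ℝ)).tendsto 1).comp hdiv
      simpa using (hC.mul tendsto_multichoose_X).const_mul (multichoose (1 - X) (m + 1))
    refine (sub_zero (1 : ℝ⟦X⟧) ▸ ih.sub hrest).congr fun L ↦ ?_
    have hrec := succ_mul_multichoose_succ (1 - X : ℝ⟦X⟧) m
    rw [sub_X_mul_multichooseDivSum_succ m.succ_ne_zero]
    push_cast at hrec ⊢
    linear_combination -multichooseDivSum (m + 1) L * hrec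

theorem tendsto_multichoose_mul_multichooseDivSum (m : ℕ) :
    Tendsto (fun L ↦ multichoose (1 - X) m * multichooseDivSum (m + 1) L) atTop
      (𝓝 (PowerSeries.mk fun n ↦ ((m + 1 : ℝ) ^ (n + 1))⁻¹)) := by
  set u : ℝˣ := Units.mk0 (m + 1 : ℝ) (by positivity)
  have hinv : invUnitsSub u = PowerSeries.mk fun n ↦ ((m + 1 : ℝ) ^ (n + 1))⁻¹ := by
    ext n
    simp [u, divp]
  have hmul : invUnitsSub u * ((m : ℝ⟦X⟧) + 1 - X) = 1 := by
    simpa [u] using invUnitsSub_mul_sub u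
  rw [← hinv, ← mul_one (invUnitsSub u)]
  refine ((tendsto_multichoose_mul_sub_X_mul_multichooseDivSum m).const_mul
    (invUnitsSub u)).congr fun L ↦ ?_
  linear_combination multichoose (1 - X) m * multichooseDivSum (m + 1) L * hmul

end Limit

section Tuples

/-- The tuples `mv` encoding positive integers `mv i + 1` with sum at most `L`; these are the
finite truncations of the index set of the nested sums. -/
def boundedTuples (n L : ℕ) : Finset (Fin n → ℕ) :=
  (Fintype.piFinset fun _ : Fin n ↦ range L).filter fun mv ↦ ∑ i, (mv i + 1) ≤ L

theorem mem_boundedTuples {n L : ℕ} {mv : Fin n → ℕ} :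
    mv ∈ boundedTuples n L ↔ ∑ i, (mv i + 1) ≤ L := by
  simp only [boundedTuples, mem_filter, Fintype.mem_piFinset, mem_range, and_iff_right_iff_imp]
  exact fun h i ↦ (single_le_sum (f := fun i ↦ mv i + 1) (fun _ _ ↦ Nat.zero_le _)
    (mem_univ i)).trans h

theorem boundedTuples_zero (L : ℕ) : boundedTuples 0 L = {Fin.elim0} := by
  ext mv
  simp [mem_boundedTuples, Subsingleton.elim mv Fin.elim0]

theorem tendsto_boundedTuples_atTop (n : ℕ) :
    Filter.Tendsto (boundedTuples n) Filter.atTop Filter.atTop :=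
  Filter.tendsto_atTop_finset_of_monotone
    (fun _ _ h _ hmv ↦ mem_boundedTuples.2 ((mem_boundedTuples.1 hmv).trans h))
    fun _ ↦ ⟨_, mem_boundedTuples.2 le_rfl⟩

theorem sum_boundedTuples_succ {B : Type*} [AddCommMonoid B] (n M q : ℕ)
    (f : (Fin (n + 1) → ℕ) → B) :
    ∑ mv ∈ boundedTuples (n + 1) (M - q), f mv =
      ∑ p ∈ Ioc q M, ∑ mv ∈ boundedTuples n (M - p), f (Fin.cons (p - q - 1) mv) := by
  rw [sum_sigma']
  refine sum_bij' (fun mv _ ↦ ⟨q + mv 0 + 1, Fin.tail mv⟩)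
    (fun x _ ↦ Fin.cons (x.1 - q - 1) x.2) ?_ ?_ ?_ ?_ ?_
  · intro mv hmv
    rw [mem_boundedTuples, Fin.sum_univ_succ] at hmv
    simp only [mem_sigma, mem_Ioc, mem_boundedTuples, Fin.tail]
    omega
  · rintro ⟨p, mv⟩ hx
    simp only [mem_sigma, mem_Ioc, mem_boundedTuples] at hx
    simp only [mem_boundedTuples, Fin.sum_univ_succ, Fin.cons_zero, Fin.cons_succ]
    omega
  · intro mv _
    simp [Nat.add_assoc]
  · rintro ⟨p, mv⟩ hx
    simp only [mem_sigma, mem_Ioc] at hx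
    simp only [Fin.cons_zero, Fin.tail_cons, Sigma.mk.injEq, heq_eq_eq, and_true]
    omega
  · intro mv _
    simp [Nat.add_assoc]

theorem PS_cons {n : ℕ} (a : ℕ) (mv : Fin n → ℕ) (j : ℕ) :
    PS (Fin.cons a mv : Fin (n + 1) → ℕ) (j + 1) = a + 1 + PS mv j := by
  simp only [PS, sum_filter, Fin.sum_univ_succ]
  simp

/-- The summand of a nested sum whose partial sums all start from the offset `q`. -/
noncomputable def nestedTerm {n : ℕ} (q : ℕ) (kv mv : Fin n → ℕ) : ℝ :=
  (∏ i : Fin n, ((q + PS mv ((i : ℕ) + 1) : ℕ) : ℝ) ^ kv i)⁻¹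

theorem nestedTerm_nonneg {n : ℕ} (q : ℕ) (kv mv : Fin n → ℕ) : 0 ≤ nestedTerm q kv mv := by
  unfold nestedTerm
  positivity

theorem nestedTerm_cons {n q p : ℕ} (h : q < p) (kv : Fin (n + 1) → ℕ) (mv : Fin n → ℕ) :
    nestedTerm q kv (Fin.cons (p - q - 1) mv) =
      ((p : ℝ) ^ kv 0)⁻¹ * nestedTerm p (Fin.tail kv) mv := by
  have hoffset (s : ℕ) : q + (p - q - 1 + 1 + s) = p + s := by omega
  simp only [nestedTerm, Fin.prod_univ_succ, mul_inv, Fin.val_zero, Fin.val_succ, PS_cons,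
    hoffset, Fin.tail]
  simp [PS]

end Tuples

section Exponents

theorem mem_Ikr {n k r : ℕ} {kv : Fin n → ℕ} :
    kv ∈ Ikr n k r ↔
      (∀ i, 1 ≤ kv i) ∧ (∀ i : Fin n, (i : ℕ) = n - 1 → 2 ≤ kv i) ∧
        (∑ i, kv i) = k ∧ ∀ i : Fin n, (i : ℕ) + 2 ≤ r → kv i = 1 := by
  simp only [Ikr, mem_filter, Fintype.mem_piFinset, mem_range, and_iff_right_iff_imp]
  rintro ⟨-, -, rfl, -⟩ i
  exact Nat.lt_succ_of_le (single_le_sum (fun _ _ ↦ Nat.zero_le _) (mem_univ i))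

theorem Ikr_one_right (n k : ℕ) : Ikr n k 1 = Ikr n k 0 := by
  ext kv
  simp [mem_Ikr]

theorem Ikr_one_left_zero {k : ℕ} (hk : 2 ≤ k) : Ikr 1 k 0 = {fun _ ↦ k} := by
  ext kv
  simp only [mem_Ikr, Fin.forall_fin_one, Fin.sum_univ_one, mem_singleton, funext_iff,
    Fin.isValue, Fin.val_eq_zero, tsub_self, forall_const, zero_add, nonpos_iff_eq_zero,
    OfNat.ofNat_ne_zero, IsEmpty.forall_iff, and_true]
  omega

theorem lt_of_mem_Ikr {n k r : ℕ} {kv : Fin (n + 1) → ℕ} (h : kv ∈ Ikr (n + 1) k r) :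
    n + 1 < k := by
  obtain ⟨hpos, hlast, rfl, -⟩ := mem_Ikr.1 h
  have hlt : ∑ _i : Fin (n + 1), 1 < ∑ i, kv i :=
    sum_lt_sum (fun i _ ↦ hpos i) ⟨Fin.last n, mem_univ _, hlast _ rfl⟩
  simpa using hlt

theorem cons_mem_Ikr {n k r a : ℕ} {kv : Fin (n + 1) → ℕ} :
    (Fin.cons a kv : Fin (n + 2) → ℕ) ∈ Ikr (n + 2) (a + k) r ↔
      1 ≤ a ∧ (2 ≤ r → a = 1) ∧ kv ∈ Ikr (n + 1) k (r - 1) := by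
  have hone (i : ℕ) : i + 1 + 2 ≤ r ↔ i + 2 ≤ r - 1 := by omega
  simp only [mem_Ikr, Fin.forall_fin_succ (n := n + 1), Fin.sum_univ_succ (n := n + 1),
    Fin.cons_zero, Fin.cons_succ, Fin.val_zero, Fin.val_succ, hone, add_right_inj, add_left_inj,
    Nat.add_one_sub_one, Nat.right_eq_add, Nat.add_eq_zero_iff, one_ne_zero, and_false,
    IsEmpty.forall_iff, add_tsub_cancel_right, true_and, zero_add]
  tauto

theorem cons_succ_mem_Ikr {n k a : ℕ} (ha : 1 ≤ a) {kv : Fin (n + 1) → ℕ} :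
    (Fin.cons (a + 1) kv : Fin (n + 2) → ℕ) ∈ Ikr (n + 2) (k + 1) 0 ↔
      (Fin.cons a kv : Fin (n + 2) → ℕ) ∈ Ikr (n + 2) k 0 := by
  simp only [mem_Ikr, Fin.forall_fin_succ (n := n + 1), Fin.sum_univ_succ (n := n + 1),
    Fin.cons_zero, Fin.cons_succ, Fin.val_zero, add_right_comm a 1, add_left_inj]
  simp [ha]

theorem sum_Ikr_succ_add_two {B : Type*} [AddCommMonoid B] (n k r : ℕ)
    (f : (Fin (n + 2) → ℕ) → B) :
    ∑ kv ∈ Ikr (n + 2) (k + 1) (r + 2), f kv =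
      ∑ kv ∈ Ikr (n + 1) k (r + 1), f (Fin.cons 1 kv) := by
  refine (sum_nbij (Fin.cons 1) (fun kv hkv ↦ ?_) (Fin.cons_right_injective _).injOn ?_
    fun _ _ ↦ rfl).symm
  · rw [add_comm k, cons_mem_Ikr]
    exact ⟨le_rfl, fun _ ↦ rfl, hkv⟩
  · intro kv hkv
    have hone : kv 0 = 1 := (mem_Ikr.1 (mem_coe.1 hkv)).2.2.2 0 (by simp)
    have hcons : Fin.cons 1 (Fin.tail kv) = kv :=
      (congrArg (Fin.cons · (Fin.tail kv)) hone.symm).trans (Fin.cons_self_tail kv)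
    rw [← hcons, mem_coe, add_comm k, cons_mem_Ikr] at hkv
    exact ⟨Fin.tail kv, hkv.2.2, hcons⟩

theorem filter_Ikr_eq_one (n k : ℕ) :
    {kv ∈ Ikr (n + 2) k 0 | kv 0 = 1} = Ikr (n + 2) k 2 := by
  ext kv
  simp [mem_Ikr, and_assoc]

theorem sum_Ikr_succ_zero {B : Type*} [AddCommMonoid B] (n k : ℕ)
    (f : (Fin (n + 2) → ℕ) → B) :
    ∑ kv ∈ Ikr (n + 2) (k + 1) 0, f kv =
      ∑ kv ∈ Ikr (n + 1) k 0, f (Fin.cons 1 kv) +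
        ∑ kv ∈ Ikr (n + 2) k 0, f (Fin.cons (kv 0 + 1) (Fin.tail kv)) := by
  rw [← sum_filter_add_sum_filter_not _ (fun kv ↦ kv 0 = 1), filter_Ikr_eq_one,
    sum_Ikr_succ_add_two, zero_add, Ikr_one_right]
  congr 1
  have hcons (kv : Fin (n + 2) → ℕ) (h : 1 < kv 0) :
      Fin.cons (kv 0 - 1 + 1) (Fin.tail kv) = kv := by
    rw [Nat.sub_add_cancel h.le, Fin.cons_self_tail]
  have hgt {kv : Fin (n + 2) → ℕ} (hkv : kv ∈ {kv ∈ Ikr (n + 2) (k + 1) 0 | ¬kv 0 = 1}) :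
      1 < kv 0 := by
    have := (mem_Ikr.1 (mem_filter.1 hkv).1).1 0
    have := (mem_filter.1 hkv).2
    omega
  refine sum_nbij' (fun kv ↦ Fin.cons (kv 0 - 1) (Fin.tail kv))
    (fun kv ↦ Fin.cons (kv 0 + 1) (Fin.tail kv)) ?_ ?_ ?_ ?_ ?_
  · intro kv hkv
    rw [← cons_succ_mem_Ikr (Nat.le_sub_one_of_lt (hgt hkv)), hcons kv (hgt hkv)]
    exact (mem_filter.1 hkv).1
  · intro kv hkv
    have hpos : 1 ≤ kv 0 := (mem_Ikr.1 hkv).1 0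
    rw [mem_filter, cons_succ_mem_Ikr hpos, Fin.cons_self_tail]
    exact ⟨hkv, by simp only [Fin.cons_zero, Nat.add_eq_right]; omega⟩
  · exact fun kv hkv ↦ by simpa using hcons kv (hgt hkv)
  · exact fun kv _ ↦ by simp
  · exact fun kv hkv ↦ by simp [hcons kv (hgt hkv)]

end Exponents

section TruncatedSums

/-- The nested sum over `Ikr n k r` with all partial sums in `Ioc q M`, each summand weighted by
the vector `f mv`. -/
noncomputable def nestedSum {A : Type*} [AddCommMonoid A] [Module ℝ A] (M q n k r : ℕ)
    (f : (Fin n → ℕ) → A) : A :=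
  ∑ kv ∈ Ikr n k r, ∑ mv ∈ boundedTuples n (M - q), nestedTerm q kv mv • f mv

/-- The part of a nested sum of depth `n + 1` and weight `k`, truncated at `M`, in which the first
partial sum is `p`. -/
noncomputable def tailSum (M n k p : ℕ) : ℝ :=
  ∑ kv ∈ Ikr (n + 1) k 0, ((p : ℝ) ^ kv 0)⁻¹ *
    ∑ mv ∈ boundedTuples n (M - p), nestedTerm p (Fin.tail kv) mv

theorem sum_nestedTerm_succ {A : Type*} [AddCommMonoid A] [Module ℝ A] (M q n : ℕ)
    (kv : Fin (n + 1) → ℕ) (f : (Fin (n + 1) → ℕ) → A) :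
    ∑ mv ∈ boundedTuples (n + 1) (M - q), nestedTerm q kv mv • f mv =
      ∑ p ∈ Ioc q M, ((p : ℝ) ^ kv 0)⁻¹ • ∑ mv ∈ boundedTuples n (M - p),
        nestedTerm p (Fin.tail kv) mv • f (Fin.cons (p - q - 1) mv) := by
  rw [sum_boundedTuples_succ]
  refine sum_congr rfl fun p hp ↦ ?_
  simp only [nestedTerm_cons (mem_Ioc.1 hp).1, mul_smul, smul_sum]

theorem nestedSum_succ_add_two {A : Type*} [AddCommMonoid A] [Module ℝ A] (M q n k r : ℕ)
    (f : (Fin (n + 2) → ℕ) → A) :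
    nestedSum M q (n + 2) (k + 1) (r + 2) f =
      ∑ p ∈ Ioc q M, (p : ℝ)⁻¹ •
        nestedSum M p (n + 1) k (r + 1) fun mv ↦ f (Fin.cons (p - q - 1) mv) := by
  simp only [nestedSum, sum_Ikr_succ_add_two, sum_nestedTerm_succ _ _ (n + 1), Fin.cons_zero,
    Fin.tail_cons, pow_one]
  rw [sum_comm]
  simp only [smul_sum]

theorem nestedSum_succ_zero {A : Type*} [AddCommMonoid A] [Module ℝ A] (M q n k : ℕ)
    (f : ℕ → A) :
    nestedSum M q (n + 1) k 0 (fun mv ↦ f (mv 0)) =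
      ∑ p ∈ Ioc q M, tailSum M n k p • f (p - q - 1) := by
  simp only [nestedSum, sum_nestedTerm_succ, Fin.cons_zero]
  rw [sum_comm]
  simp only [tailSum, sum_smul, mul_smul]

theorem tailSum_zero (M p : ℕ) {k : ℕ} (hk : 2 ≤ k) : tailSum M 0 k p = ((p : ℝ) ^ k)⁻¹ := by
  simp [tailSum, Ikr_one_left_zero hk, boundedTuples_zero, nestedTerm]

theorem tailSum_eq_zero (M p : ℕ) {n k : ℕ} (hk : k ≤ n + 1) : tailSum M n k p = 0 := by
  have hempty : Ikr (n + 1) k 0 = ∅ :=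
    eq_empty_of_forall_notMem fun _ hkv ↦ hk.not_gt (lt_of_mem_Ikr hkv)
  rw [tailSum, hempty, sum_empty]

theorem mul_tailSum_succ {p : ℕ} (hp : p ≠ 0) (M n k : ℕ) :
    p * tailSum M (n + 1) (k + 1) p =
      tailSum M (n + 1) k p + ∑ q ∈ Ioc p M, tailSum M n k q := by
  have hp_cancel (j : ℕ) : (p : ℝ) * ((p : ℝ) ^ (j + 1))⁻¹ = ((p : ℝ) ^ j)⁻¹ := by
    field_simp
    ring
  have hfirst : ∑ kv ∈ Ikr (n + 1) k 0, ∑ mv ∈ boundedTuples (n + 1) (M - p), nestedTerm p kv mv =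
      ∑ q ∈ Ioc p M, tailSum M n k q := by
    simpa [nestedSum] using nestedSum_succ_zero M p n k fun _ ↦ (1 : ℝ)
  rw [← hfirst, tailSum, tailSum, sum_Ikr_succ_zero, mul_add, mul_sum, mul_sum, add_comm]
  simp only [Fin.cons_zero, Fin.tail_cons, ← mul_assoc, hp_cancel]
  simp

end TruncatedSums

section Subsets
open Polynomial

theorem sum_finset_fin_succ {B : Type*} [AddCommMonoid B] {n : ℕ} (F : Finset (Fin (n + 1)) → B) :
    ∑ J, F J = ∑ J : Finset (Fin n),
      (F (J.map (Fin.succEmb n)) + F (insert 0 (J.map (Fin.succEmb n)))) := by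
  rw [← powerset_univ, Fin.univ_succ, cons_eq_insert, sum_powerset_insert (by simp),
    ← sum_add_distrib]
  refine (sum_nbij (map (Fin.succEmb n)) (fun J _ ↦ ?_) (map_injective _).injOn (fun T hT ↦ ?_)
    fun _ _ ↦ rfl).symm
  · exact mem_powerset.2 (map_subset_map.2 (subset_univ J))
  · obtain ⟨J, -, rfl⟩ := subset_map_iff.1 (mem_powerset.1 hT)
    exact ⟨J, mem_coe.2 (mem_univ J), rfl⟩

theorem sum_nonempty_succ {B : Type*} [AddCommMonoid B] {n : ℕ} (F : Finset (Fin (n + 1)) → B) :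
    ∑ J with J.Nonempty, F J = F {0} + ∑ J : Finset (Fin n) with J.Nonempty,
      (F (J.map (Fin.succEmb n)) + F (insert 0 (J.map (Fin.succEmb n)))) := by
  have hempty : ({J : Finset (Fin n) | ¬J.Nonempty} : Finset _) = {∅} := by
    ext
    simp
  rw [sum_filter, sum_finset_fin_succ, ← sum_filter_not_add_sum_filter _ Finset.Nonempty, hempty,
    Finset.sum_singleton]
  congr 1
  · simp
  · refine sum_congr rfl fun J hJ ↦ ?_
    rw [if_pos (map_nonempty.2 (mem_filter.1 hJ).2), if_pos (insert_nonempty _ _)]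

theorem sup_map_succEmb {n : ℕ} {J : Finset (Fin n)} (hJ : J.Nonempty) :
    (J.map (Fin.succEmb n)).sup (fun j ↦ (j : ℕ) + 1) = J.sup (fun j ↦ (j : ℕ) + 1) + 1 := by
  rw [sup_map, apply_sup_eq_sup_comp_of_nonempty (g := (· + 1)) (fun a b h ↦ by simpa using h) hJ]
  simp [Function.comp_def]

theorem sup_insert_zero_map_succEmb {n : ℕ} {J : Finset (Fin n)} (hJ : J.Nonempty) :
    (insert 0 (J.map (Fin.succEmb n))).sup (fun j ↦ (j : ℕ) + 1) =
      J.sup (fun j ↦ (j : ℕ) + 1) + 1 := by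
  rw [sup_insert, sup_map_succEmb hJ]
  simp

theorem sup_succ_ne_zero {n : ℕ} {J : Finset (Fin n)} (hJ : J.Nonempty) :
    (J.sup fun j ↦ (j : ℕ) + 1) ≠ 0 := by
  obtain ⟨j, hj⟩ := hJ
  exact (j.val.succ_pos.trans_le (le_sup (f := fun j : Fin n ↦ (j : ℕ) + 1) hj)).ne'

/-- The truncation of the sums `S n k m J`, with all partial sums offset by `q`, as a generating
polynomial in which `X ^ m` marks the constraint `∑_{j ∈ J} m_j = m`. -/
noncomputable def subsetPoly (M n k q : ℕ) (J : Finset (Fin n)) : ℝ[X] :=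
  nestedSum M q n k (J.sup fun j ↦ (j : ℕ) + 1) fun mv ↦ X ^ ∑ j ∈ J, (mv j + 1)

theorem subsetPoly_singleton_zero (M n k q : ℕ) :
    subsetPoly M (n + 1) k q {0} = ∑ p ∈ Ioc q M, tailSum M n k p • X ^ (p - q) := by
  simp only [subsetPoly, sup_singleton, Fin.val_zero, zero_add, Finset.sum_singleton]
  rw [nestedSum, Ikr_one_right, ← nestedSum,
    nestedSum_succ_zero M q n k fun a ↦ (X : ℝ[X]) ^ (a + 1)]
  refine sum_congr rfl fun p hp ↦ ?_
  rw [Nat.sub_add_cancel (Nat.sub_pos_of_lt (mem_Ioc.1 hp).1)]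

theorem subsetPoly_map_succEmb (M n k q : ℕ) {J : Finset (Fin n)} (hJ : J.Nonempty) :
    subsetPoly M (n + 1) (k + 1) q (J.map (Fin.succEmb n)) =
      ∑ p ∈ Ioc q M, (p : ℝ)⁻¹ • subsetPoly M n k p J := by
  rcases n with _ | n
  · exact (hJ.ne_empty (Subsingleton.elim _ _)).elim
  obtain ⟨r, hr⟩ := Nat.exists_eq_succ_of_ne_zero (sup_succ_ne_zero hJ)
  simp only [subsetPoly, sup_map_succEmb hJ, hr, nestedSum_succ_add_two, sum_map, Fin.coe_succEmb,
    Fin.cons_succ]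

theorem subsetPoly_insert_zero_map_succEmb (M n k q : ℕ) {J : Finset (Fin n)} (hJ : J.Nonempty) :
    subsetPoly M (n + 1) (k + 1) q (insert 0 (J.map (Fin.succEmb n))) =
      ∑ p ∈ Ioc q M, X ^ (p - q) * (p : ℝ)⁻¹ • subsetPoly M n k p J := by
  rcases n with _ | n
  · exact (hJ.ne_empty (Subsingleton.elim _ _)).elim
  obtain ⟨r, hr⟩ := Nat.exists_eq_succ_of_ne_zero (sup_succ_ne_zero hJ)
  have hzero : (0 : Fin (n + 2)) ∉ J.map (Fin.succEmb (n + 1)) := by simp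
  simp only [subsetPoly, sup_insert_zero_map_succEmb hJ, hr, nestedSum_succ_add_two,
    sum_insert hzero, sum_map, Fin.coe_succEmb, Fin.cons_zero, Fin.cons_succ]
  refine sum_congr rfl fun p hp ↦ ?_
  rw [Nat.sub_add_cancel (Nat.sub_pos_of_lt (mem_Ioc.1 hp).1)]
  simp only [nestedSum, pow_add, mul_smul_comm, mul_sum]

/-- The signed sum of `subsetPoly` over the nonempty sets of indices. -/
noncomputable def alternatingPoly (M n k q : ℕ) : ℝ[X] :=
  ∑ J : Finset (Fin n) with J.Nonempty, (-1) ^ (J.card - 1) * subsetPoly M n k q J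

theorem alternatingPoly_succ (M n k q : ℕ) :
    alternatingPoly M (n + 1) (k + 1) q = ∑ p ∈ Ioc q M,
      (X ^ (p - q) * C (tailSum M n (k + 1) p) +
        (1 - X ^ (p - q)) * (C (p : ℝ)⁻¹ * alternatingPoly M n k p)) := by
  have hpair {J : Finset (Fin n)} (hJ : J.Nonempty) :
      (-1) ^ ((J.map (Fin.succEmb n)).card - 1) *
          subsetPoly M (n + 1) (k + 1) q (J.map (Fin.succEmb n)) +
        (-1) ^ ((insert 0 (J.map (Fin.succEmb n))).card - 1) *
          subsetPoly M (n + 1) (k + 1) q (insert 0 (J.map (Fin.succEmb n))) =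
      ∑ p ∈ Ioc q M, (1 - X ^ (p - q)) *
        (C (p : ℝ)⁻¹ * ((-1) ^ (J.card - 1) * subsetPoly M n k p J)) := by
    obtain ⟨c, hc⟩ := Nat.exists_eq_succ_of_ne_zero hJ.card_pos.ne'
    rw [card_insert_of_notMem (by simp), card_map, subsetPoly_map_succEmb _ _ _ _ hJ,
      subsetPoly_insert_zero_map_succEmb _ _ _ _ hJ, hc, mul_sum, mul_sum, ← sum_add_distrib]
    refine sum_congr rfl fun p _ ↦ ?_
    simp only [smul_eq_C_mul, Nat.succ_eq_add_one, Nat.add_sub_cancel, pow_succ]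
    ring
  rw [alternatingPoly, sum_nonempty_succ, sum_congr rfl fun J hJ ↦ hpair (mem_filter.1 hJ).2,
    sum_comm, subsetPoly_singleton_zero, sum_add_distrib]
  simp only [alternatingPoly, mul_sum, smul_eq_C_mul, mul_comm (C _) (X ^ _)]
  simp

end Subsets

section TailSeries
open Filter PowerSeries Ring
open scoped Topology PowerSeries.WithPiTopology

/-- The generating series in the depth of the sums `tailSum` whose weight exceeds the least
admissible one by `d - 1`. There is no such sum for `d = 0`, where the value is chosen such that
`natCast_mul_tailSeries_succ` holds. -/
noncomputable def tailSeries (M : ℕ) : ℕ → ℕ → ℝ⟦X⟧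
  | 0, p => C (p : ℝ)⁻¹
  | d + 1, p => PowerSeries.mk fun n ↦ tailSum M n (n + d + 2) p

theorem natCast_mul_tailSeries_succ {p : ℕ} (hp : p ≠ 0) (M d : ℕ) :
    (p : ℝ⟦X⟧) * tailSeries M (d + 1) p =
      tailSeries M d p + X * ∑ q ∈ Ioc p M, tailSeries M (d + 1) q := by
  ext n
  rw [← map_natCast (C (R := ℝ)), coeff_C_mul, map_add]
  rcases n with _ | n
  · cases d <;> simp only [tailSeries, coeff_mk, coeff_zero_X_mul, coeff_zero_C, add_zero,
      tailSum_zero M p (Nat.le_add_left 2 _)] <;> field_simp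
    ring
  · rw [coeff_succ_X_mul, map_sum]
    cases d <;> simp only [tailSeries, coeff_mk, Nat.add_right_comm n 1, coeff_succ_C]
    · rw [mul_tailSum_succ hp, tailSum_eq_zero _ _ (by omega)]
    · rw [mul_tailSum_succ hp]
      rfl

theorem pow_mul_sum_multichoose_mul_tailSeries {m : ℕ} (hm : m ≠ 0) (M d : ℕ) :
    (m : ℝ⟦X⟧) ^ d * ∑ p ∈ Icc m M, multichoose X (p - m) * tailSeries M d p =
      multichooseDivSum m (M + 1 - m) := by
  induction d with
  | zero =>
    rw [← Ico_add_one_right_eq_Icc, sum_Ico_eq_sum_range]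
    simp only [tailSeries, multichooseDivSum, Nat.add_sub_cancel_left, pow_zero, one_mul, mul_comm,
      add_comm]
  | succ d ih =>
    rw [pow_succ, mul_assoc, mul_sum_multichoose_mul_of_rec m M X _ (tailSeries M d), ih]
    intro p hp
    exact natCast_mul_tailSeries_succ (by have := (mem_Icc.1 hp).1; omega) M d

/-- The generating series in the depth of the polynomials `alternatingPoly` whose weight exceeds
the depth by `d + 1`. -/
noncomputable def alternatingSeries (M d q : ℕ) : (Polynomial ℝ)⟦X⟧ :=
  PowerSeries.mk fun n ↦ alternatingPoly M n (n + d + 1) q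

theorem alternatingSeries_eq_X_mul_sum (M d q : ℕ) :
    alternatingSeries M d q = X * ∑ p ∈ Ioc q M,
      (C Polynomial.X ^ (p - q) * PowerSeries.map Polynomial.C (tailSeries M (d + 1) p) +
        (1 - C Polynomial.X ^ (p - q)) *
          (C (Polynomial.C (p : ℝ)⁻¹) * alternatingSeries M d p)) := by
  ext1 n
  rcases n with _ | n
  · simp [alternatingSeries, alternatingPoly, Subsingleton.elim _ ∅]
  · rw [coeff_succ_X_mul, map_sum, alternatingSeries, coeff_mk, Nat.add_right_comm n 1,
      alternatingPoly_succ]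
    refine sum_congr rfl fun p _ ↦ ?_
    rw [← map_pow, ← map_one (C (R := Polynomial ℝ)), ← map_sub]
    simp only [map_add, coeff_C_mul, coeff_map, alternatingSeries, tailSeries, coeff_mk]

theorem alternatingSeries_zero_eq_sum_multichoose (M d : ℕ) :
    alternatingSeries M d 0 = X * ∑ m ∈ range M, C Polynomial.X ^ (m + 1) *
      PowerSeries.map Polynomial.C (multichoose (1 - X : ℝ⟦X⟧) m *
        ∑ p ∈ Icc (m + 1) M, multichoose X (p - (m + 1)) * tailSeries M (d + 1) p) := by
  rw [eq_sum_multichoose_of_rec (C Polynomial.X) X M (alternatingSeries M d)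
    (fun p ↦ C (Polynomial.C (p : ℝ)⁻¹) * alternatingSeries M d p)
    (fun p ↦ PowerSeries.map Polynomial.C (tailSeries M (d + 1) p)) _
    fun q _ ↦ alternatingSeries_eq_X_mul_sum M d q]
  · simp only [map_mul, map_sum, map_multichoose, map_sub, map_one, map_X, mul_assoc]
  · intro p hp
    have hp_ne : (p : ℝ) ≠ 0 := by
      have := (mem_Ioc.1 hp).1
      positivity
    rw [← mul_assoc, ← map_natCast (C (R := Polynomial ℝ)), ← map_natCast (Polynomial.C (R := ℝ)),
      ← map_mul, ← map_mul, mul_inv_cancel₀ hp_ne, map_one, map_one, one_mul]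

theorem coeff_alternatingPoly (M n d m : ℕ) :
    (alternatingPoly M (n + 1) (d + n + 2) 0).coeff (m + 1) =
      coeff n (multichoose (1 - X : ℝ⟦X⟧) m *
        ∑ p ∈ Icc (m + 1) M, multichoose X (p - (m + 1)) * tailSeries M (d + 1) p) := by
  have hcoeff := congrArg (coeff (n + 1)) (alternatingSeries_zero_eq_sum_multichoose M d)
  rw [alternatingSeries, coeff_mk, coeff_succ_X_mul, map_sum] at hcoeff
  rw [show d + n + 2 = n + 1 + d + 1 by ring, hcoeff, Polynomial.finsetSum_coeff]
  simp only [← map_pow, coeff_C_mul, coeff_map, Polynomial.coeff_mul_C, Polynomial.coeff_X_pow,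
    add_left_inj, ite_mul, one_mul, zero_mul, sum_ite_eq, mem_range, ite_eq_left_iff, not_lt]
  intro hM
  simp [hM]

theorem tendsto_coeff_alternatingPoly_one_div_pow (n d m : ℕ) :
    Tendsto (fun M ↦ (alternatingPoly M (n + 1) (d + n + 2) 0).coeff (m + 1)) atTop
      (𝓝 (1 / ((m + 1 : ℕ) : ℝ) ^ (d + n + 2))) := by
  have hlimit := ((WithPiTopology.continuous_coeff ℝ n).tendsto _ |>.comp
    ((tendsto_multichoose_mul_multichooseDivSum m).comp (tendsto_sub_atTop_nat m))).const_mul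
      (((m + 1 : ℕ) : ℝ) ^ (d + 1))⁻¹
  rw [coeff_mk, ← Nat.cast_succ, ← mul_inv, ← pow_add,
    show d + 1 + (n + 1) = d + n + 2 by ring, ← one_div (_ ^ (d + n + 2))] at hlimit
  refine hlimit.congr fun M ↦ ?_
  have hsum := pow_mul_sum_multichoose_mul_tailSeries m.succ_ne_zero M (d + 1)
  rw [Nat.add_sub_add_right, ← map_natCast (C (R := ℝ)), ← map_pow] at hsum
  rw [Function.comp_apply, Function.comp_apply, ← hsum, coeff_alternatingPoly, mul_left_comm,
    coeff_C_mul, inv_mul_cancel_left₀ (by positivity)]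

end TailSeries

section Convergence
open Filter
open scoped Topology

theorem sum_nestedTerm_succ_le {n M q : ℕ} {kv : Fin (n + 1) → ℕ} {c : ℝ} (hc : 0 ≤ c)
    (hterm : ∀ p ∈ Ioc q M, ((p : ℝ) ^ kv 0)⁻¹ *
      ∑ mv ∈ boundedTuples n (M - p), nestedTerm p (Fin.tail kv) mv ≤ c * ((p : ℝ) ^ 2)⁻¹) :
    ∑ mv ∈ boundedTuples (n + 1) (M - q), nestedTerm q kv mv ≤ c * (2 / ((q : ℝ) + 1)) := by
  have hsplit := sum_nestedTerm_succ M q n kv fun _ ↦ (1 : ℝ)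
  simp only [smul_eq_mul, mul_one] at hsplit
  calc ∑ mv ∈ boundedTuples (n + 1) (M - q), nestedTerm q kv mv
      ≤ ∑ p ∈ Ioc q M, c * ((p : ℝ) ^ 2)⁻¹ := hsplit.trans_le (sum_le_sum hterm)
    _ ≤ c * (2 / ((q : ℝ) + 1)) := by
      rw [← mul_sum, ← Ioo_add_one_right_eq_Ioc]
      exact mul_le_mul_of_nonneg_left (sum_Ioo_inv_sq_le q (M + 1)) hc

theorem sum_nestedTerm_le {n : ℕ} {kv : Fin (n + 1) → ℕ} (hpos : ∀ i, 1 ≤ kv i)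
    (hlast : 2 ≤ kv (Fin.last n)) (M q : ℕ) :
    ∑ mv ∈ boundedTuples (n + 1) (M - q), nestedTerm q kv mv ≤ 2 ^ (n + 1) / ((q : ℝ) + 1) := by
  induction n generalizing q with
  | zero =>
    have hbound := sum_nestedTerm_succ_le (M := M) (q := q) (kv := kv) zero_le_one fun p hp ↦ by
      have hp_one : (1 : ℝ) ≤ p := Nat.one_le_cast.2 (Nat.one_le_of_lt (mem_Ioc.1 hp).1)
      simp only [boundedTuples_zero, sum_singleton, nestedTerm, univ_eq_empty, prod_empty, inv_one,
        mul_one, one_mul]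
      exact inv_anti₀ (by positivity) (pow_le_pow_right₀ hp_one hlast)
    simpa using hbound
  | succ n ih =>
    have hbound := sum_nestedTerm_succ_le (M := M) (q := q) (kv := kv) (c := 2 ^ (n + 1))
      (by positivity) fun p hp ↦ by
        have hp_one : (1 : ℝ) ≤ p := Nat.one_le_cast.2 (Nat.one_le_of_lt (mem_Ioc.1 hp).1)
        calc ((p : ℝ) ^ kv 0)⁻¹ * ∑ mv ∈ boundedTuples (n + 1) (M - p),
              nestedTerm p (Fin.tail kv) mv
            ≤ (p : ℝ)⁻¹ * (2 ^ (n + 1) / (p : ℝ)) := by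
              gcongr
              · exact sum_nonneg fun mv _ ↦ nestedTerm_nonneg p _ mv
              · exact le_self_pow₀ hp_one (Nat.one_le_iff_ne_zero.1 (hpos 0))
              · refine (ih (kv := Fin.tail kv) (fun i ↦ hpos i.succ) hlast p).trans ?_
                gcongr
                linarith
          _ = 2 ^ (n + 1) * ((p : ℝ) ^ 2)⁻¹ := by ring
    exact hbound.trans_eq (by ring)

theorem summable_nestedTerm {n k r : ℕ} {kv : Fin (n + 1) → ℕ} (hkv : kv ∈ Ikr (n + 1) k r) :
    Summable (nestedTerm 0 kv) := by
  obtain ⟨hpos, hlast, -⟩ := mem_Ikr.1 hkv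
  refine summable_of_sum_le (c := 2 ^ (n + 1)) (nestedTerm_nonneg 0 kv) fun s ↦ ?_
  obtain ⟨L, hL⟩ := ((tendsto_boundedTuples_atTop (n + 1)).eventually_ge_atTop s).exists
  calc ∑ mv ∈ s, nestedTerm 0 kv mv ≤ ∑ mv ∈ boundedTuples (n + 1) L, nestedTerm 0 kv mv :=
        sum_le_sum_of_subset_of_nonneg hL fun mv _ _ ↦ nestedTerm_nonneg 0 kv mv
    _ ≤ 2 ^ (n + 1) := by simpa using sum_nestedTerm_le hpos (hlast _ rfl) L 0

theorem tendsto_coeff_subsetPoly (n k m : ℕ) (J : Finset (Fin (n + 1))) :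
    Tendsto (fun M ↦ (subsetPoly M (n + 1) k 0 J).coeff m) atTop (𝓝 (S (n + 1) k m J)) := by
  simp only [subsetPoly, nestedSum, Polynomial.finsetSum_coeff, S]
  refine tendsto_finsetSum _ fun kv hkv ↦ ?_
  set T : Set (Fin (n + 1) → ℕ) := {mv | ∑ j ∈ J, (mv j + 1) = m}
  have htsum : ∑' mv : T, (∏ i : Fin (n + 1), ((PS mv.val ((i : ℕ) + 1) : ℕ) : ℝ) ^ kv i)⁻¹ =
      ∑' mv, T.indicator (nestedTerm 0 kv) mv := by
    rw [← _root_.tsum_subtype]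
    simp only [nestedTerm, zero_add]
  refine htsum ▸ (((summable_nestedTerm hkv).indicator T).hasSum.comp
    (tendsto_boundedTuples_atTop (n + 1))).congr fun M ↦ ?_
  refine sum_congr rfl fun mv _ ↦ ?_
  simp [T, Set.indicator_apply, Polynomial.coeff_X_pow, eq_comm (a := m)]

theorem tendsto_coeff_alternatingPoly_sum_S (n k m : ℕ) :
    Tendsto (fun M ↦ (alternatingPoly M (n + 1) k 0).coeff m) atTop
      (𝓝 (∑ J : Finset (Fin (n + 1)) with J.Nonempty, (-1) ^ (J.card - 1) * S (n + 1) k m J)) := by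
  have hcoeff (M : ℕ) : (alternatingPoly M (n + 1) k 0).coeff m =
      ∑ J : Finset (Fin (n + 1)) with J.Nonempty,
        (-1) ^ (J.card - 1) * (subsetPoly M (n + 1) k 0 J).coeff m := by
    rw [alternatingPoly, Polynomial.finsetSum_coeff]
    refine sum_congr rfl fun J _ ↦ ?_
    rw [← Polynomial.coeff_C_mul, map_pow, map_neg, map_one]
  simp only [hcoeff]
  exact tendsto_finsetSum _ fun J _ ↦ (tendsto_coeff_subsetPoly n k m J).const_mul _

end Convergence

theorem alternating_sum_S (n k m : ℕ) (hn : 1 ≤ n) (hk : n + 1 ≤ k) (hm : 1 ≤ m) :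
    ∑ J ∈ (Finset.univ : Finset (Fin n)).powerset.filter Finset.Nonempty,
      (-1 : ℝ) ^ (J.card - 1) * S n k m J = 1 / (m : ℝ) ^ k := by
  obtain ⟨n, rfl⟩ := Nat.exists_eq_add_of_le' hn
  obtain ⟨d, rfl⟩ := Nat.exists_eq_add_of_le' hk
  obtain ⟨m, rfl⟩ := Nat.exists_eq_add_of_le' hm
  rw [powerset_univ]
  exact tendsto_nhds_unique (tendsto_coeff_alternatingPoly_sum_S n _ (m + 1))
    (tendsto_coeff_alternatingPoly_one_div_pow n d m)
end

section
/- Let n, k be positive integers with k ≥ n+1. Then the sum formula for multiple zeta-values holds: Σ_{𝐤∈I(k,1)} ζ(k₁,…,kₙ) = ζ(k), where ζ(k₁,…,kₙ) = Σ_{m₁,…,mₙ=1}^∞ 1/(m₁^{k₁} (m₁+m₂)^{k₂} ⋯ (m₁+⋯+mₙ)^{kₙ}) and ζ(k) = Σ_{m=1}^∞ 1/m^k. -/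
open Finset

/-!
Weight the sums of fixed depth `n` by powers of `x ∈ (0, 1)`. Expanding geometric series turns the
sum over admissible indices into `∑ₚ 1 / ((P₁ - x) ⋯ (Pₙ - x) Pₙ)`, with `Pᵢ` the partial sums of
`p`, and the sum of the zeta values into `∑ₘ 1 / ((m - x) mⁿ)`. The connector `C(a, b)` makes them
equal: it satisfies `1 / a = ∑_{b > 0} C(a, b) / (b - x)`, which introduces a new variable `b` in
place of the factor `1 / Pₙ`, and `∑_{a > m} C(a, b) / (a - x) = C(m, b) / b`, which removes the
partial sums one at a time from the last, each leaving a factor `1 / b`. Both are telescoping sums.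
Comparing the coefficients of the powers of `x` gives the sum formula.
-/

open Filter Topology
open scoped NNReal ENNReal

section Series

theorem tsum_eq_of_add_succ_eq {M : Type*} [AddCommMonoid M] [TopologicalSpace M] [ContinuousAdd M]
    [T2Space M] {t s : ℕ → M} (ht : Summable t) (hs : Tendsto s atTop (𝓝 0))
    (hts : ∀ j, t j + s (j + 1) = s j) : ∑' j, t j = s 0 := by
  have partial_sum : ∀ N, ∑ j ∈ range N, t j + s N = s 0 := by
    intro N
    induction N with
    | zero => simp
    | succ N ih => rw [sum_range_succ, add_assoc, hts, ih]
  have hlim := ht.hasSum.tendsto_sum_nat.add hs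
  simp only [partial_sum, add_zero] at hlim
  exact tendsto_nhds_unique hlim tendsto_const_nhds

theorem tsum_fin_snoc {α : Type*} {n : ℕ} (F : (Fin (n + 1) → α) → ℝ≥0∞) :
    ∑' v, F v = ∑' (p : Fin n → α) (a : α), F (Fin.snoc p a) := by
  rw [← (Fin.snocEquiv fun _ : Fin (n + 1) => α).tsum_eq,
    ← (Equiv.prodComm (Fin n → α) α).tsum_eq, ENNReal.tsum_prod']
  rfl

theorem prod_tsum_eq_tsum_prod {α : Type*} {n : ℕ} (f : Fin n → α → ℝ≥0∞) :
    ∏ i, ∑' a, f i a = ∑' v : Fin n → α, ∏ i, f i (v i) := by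
  induction n with
  | zero => simp
  | succ n ih =>
    simp only [tsum_fin_snoc, Fin.prod_univ_castSucc, Fin.snoc_castSucc, Fin.snoc_last, ih,
      ENNReal.tsum_mul_left, ENNReal.tsum_mul_right]

theorem tsum_eq_tsum_sum_piAntidiag {ι : Type*} [Fintype ι] [DecidableEq ι]
    (F : (ι → ℕ) → ℝ≥0∞) : ∑' e, F e = ∑' d, ∑ e ∈ piAntidiag univ d, F e := by
  rw [← ENNReal.tsum_fiberwise F fun e => ∑ i, e i]
  refine tsum_congr fun d => ?_
  have hfiber : (fun e : ι → ℕ => ∑ i, e i) ⁻¹' {d} =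
      (piAntidiag univ d : Finset (ι → ℕ)) := by
    ext e
    simp
  rw [hfiber]
  exact Finset.tsum_subtype _ F

theorem inv_sub_eq_tsum {c : ℝ≥0∞} (hc0 : c ≠ 0) (hc : c ≠ ∞) (x : ℝ≥0∞) :
    (c - x)⁻¹ = ∑' e : ℕ, x ^ e * c⁻¹ ^ (e + 1) := by
  have hfactor : c - x = c * (1 - x * c⁻¹) := by
    rw [ENNReal.mul_sub fun _ _ => hc, mul_one, mul_left_comm, ENNReal.mul_inv_cancel hc0 hc,
      mul_one]
  rw [hfactor, ENNReal.mul_inv (.inl hc0) (.inl hc), ← ENNReal.tsum_geometric,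
    ← ENNReal.tsum_mul_left]
  exact tsum_congr fun e => by ring

theorem tsum_pow_mul_eq_add (x : ℝ≥0∞) (a : ℕ → ℝ≥0∞) :
    ∑' d, x ^ d * a d = a 0 + x * ∑' d, x ^ d * a (d + 1) := by
  rw [tsum_eq_zero_add' ENNReal.summable, ← ENNReal.tsum_mul_left]
  simp only [pow_zero, one_mul, pow_succ', mul_assoc]

theorem tsum_pow_mul_succ_ne_top {x : ℝ≥0∞} (hx : x ≠ 0) {a : ℕ → ℝ≥0∞}
    (ha : ∑' d, x ^ d * a d ≠ ∞) : ∑' d, x ^ d * a (d + 1) ≠ ∞ := by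
  rw [tsum_pow_mul_eq_add] at ha
  intro htop
  simp [htop, hx] at ha

theorem tendsto_tsum_pow_mul_nhdsGT_zero {r : ℝ≥0∞} (hr : 0 < r) {a : ℕ → ℝ≥0∞}
    (ha : ∑' d, r ^ d * a d ≠ ∞) :
    Tendsto (fun x : ℝ≥0∞ => ∑' d, x ^ d * a d) (𝓝[>] 0) (𝓝 (a 0)) := by
  set K := ∑' d, r ^ d * a (d + 1)
  have hK : K ≠ ∞ := tsum_pow_mul_succ_ne_top hr.ne' ha
  have hbound : Tendsto (fun x => a 0 + x * K) (𝓝[>] 0) (𝓝 (a 0)) := by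
    have := (ENNReal.Tendsto.mul_const tendsto_id (.inr hK)).const_add (a 0)
      |>.mono_left (nhdsWithin_le_nhds (a := (0 : ℝ≥0∞)) (s := Set.Ioi 0))
    simpa using this
  refine tendsto_of_tendsto_of_tendsto_of_le_of_le' tendsto_const_nhds hbound
    (.of_forall fun x => ?_) ?_
  · rw [tsum_pow_mul_eq_add]
    exact le_self_add
  · filter_upwards [Ioo_mem_nhdsGT hr] with x hx
    rw [tsum_pow_mul_eq_add]
    simp only [K]
    gcongr
    exact hx.2.le

theorem coeff_zero_eq_of_eventually_tsum_pow_mul_eq {a b : ℕ → ℝ≥0∞}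
    (hb : ∀ᶠ x in 𝓝[>] (0 : ℝ≥0∞), ∑' d, x ^ d * b d ≠ ∞)
    (hab : ∀ᶠ x in 𝓝[>] (0 : ℝ≥0∞), ∑' d, x ^ d * a d = ∑' d, x ^ d * b d) : a 0 = b 0 := by
  have : (𝓝[>] (0 : ℝ≥0∞)).NeBot := nhdsGT_neBot_of_exists_gt ⟨1, one_pos⟩
  obtain ⟨r, hr, hbr, habr⟩ := (eventually_mem_nhdsWithin.and (hb.and hab)).exists
  exact tendsto_nhds_unique_of_eventuallyEq
    (tendsto_tsum_pow_mul_nhdsGT_zero hr (habr ▸ hbr)) (tendsto_tsum_pow_mul_nhdsGT_zero hr hbr)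
    hab

theorem eq_of_eventually_tsum_pow_mul_eq {a b : ℕ → ℝ≥0∞}
    (hb : ∀ᶠ x in 𝓝[>] (0 : ℝ≥0∞), ∑' d, x ^ d * b d ≠ ∞)
    (hab : ∀ᶠ x in 𝓝[>] (0 : ℝ≥0∞), ∑' d, x ^ d * a d = ∑' d, x ^ d * b d) : a = b := by
  ext d
  induction d generalizing a b with
  | zero => exact coeff_zero_eq_of_eventually_tsum_pow_mul_eq hb hab
  | succ _ ih =>
    refine ih (a := fun d => a (d + 1)) (b := fun d => b (d + 1)) ?_ ?_
    · filter_upwards [hb, eventually_mem_nhdsWithin] with x hbx hx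
      exact tsum_pow_mul_succ_ne_top hx.ne' hbx
    · filter_upwards [hb, hab, eventually_mem_nhdsWithin, eventually_nhdsWithin_of_eventually_nhds
        (gt_mem_nhds ENNReal.zero_lt_top)] with x hbx habx hx hx_top
      have hb0 : b 0 ≠ ∞ := by
        rw [tsum_pow_mul_eq_add] at hbx
        exact (ENNReal.add_ne_top.1 hbx).1
      rwa [tsum_pow_mul_eq_add, tsum_pow_mul_eq_add x b,
        coeff_zero_eq_of_eventually_tsum_pow_mul_eq hb hab, ENNReal.add_right_inj hb0,
        ENNReal.mul_right_inj hx.ne' hx_top.ne] at habx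

end Series

section Connector

/-- The connector `Γ(a + 1 - x) Γ(b + 1 - x) / (Γ(1 - x) Γ(a + b + 1 - x))` of the method of
connected sums; `ascPochhammer` takes the value `(1 - x)(2 - x)⋯(a - x)` at `1 - x`. The
subtraction `1 - x` is truncated, so only `x < 1` is meaningful. -/
noncomputable def connector (x : ℝ≥0) (a b : ℕ) : ℝ≥0 :=
  (ascPochhammer ℝ≥0 a).eval (1 - x) * (ascPochhammer ℝ≥0 b).eval (1 - x) /
    (ascPochhammer ℝ≥0 (a + b)).eval (1 - x)

theorem connector_comm (x : ℝ≥0) (a b : ℕ) : connector x a b = connector x b a := by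
  rw [connector, connector, mul_comm, add_comm]

variable {x : ℝ≥0} (hx : x < 1)

include hx

theorem connector_zero_right (a : ℕ) : connector x a 0 = 1 := by
  have := (ascPochhammer_pos a (1 - x) (tsub_pos_of_lt hx)).ne'
  simp [connector, this]

theorem connector_succ_right (a b : ℕ) :
    connector x a (b + 1) = connector x a b * ((b + (1 - x)) / (a + b + (1 - x))) := by
  have hy := tsub_pos_of_lt hx
  have := (ascPochhammer_pos (a + b) (1 - x) hy).ne'
  rw [connector, connector, ← add_assoc, ascPochhammer_succ_eval, ascPochhammer_succ_eval]
  push_cast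
  field_simp
  ring

theorem connector_le_one (a b : ℕ) : connector x a b ≤ 1 := by
  induction b with
  | zero => rw [connector_zero_right hx]
  | succ b ih =>
    rw [connector_succ_right hx]
    refine mul_le_one' ih (div_le_one_of_le₀ ?_ zero_le)
    rw [add_assoc]
    exact le_add_self

theorem tendsto_connector_succ_right (b : ℕ) :
    Tendsto (fun a => connector x a (b + 1)) atTop (𝓝 0) := by
  have hratio : Tendsto (fun a : ℕ => (b + (1 - x)) * ((a : ℝ≥0) + b + (1 - x))⁻¹) atTop (𝓝 0) := by
    have hden : Tendsto (fun a : ℕ => (a : ℝ≥0) + b + (1 - x)) atTop atTop :=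
      tendsto_atTop_mono (fun a => by rw [add_assoc]; exact le_self_add)
        (tendsto_natCast_atTop_atTop (R := ℝ≥0))
    simpa only [mul_zero, Function.comp_apply] using
      (tendsto_inv_atTop_zero.comp hden).const_mul (b + (1 - x))
  refine tendsto_of_tendsto_of_tendsto_of_le_of_le tendsto_const_nhds hratio
    (fun _ => zero_le) fun a => ?_
  rw [connector_succ_right hx, div_eq_mul_inv]
  exact mul_le_of_le_one_left' (connector_le_one hx a b)

theorem connector_telescope (a b : ℕ) :
    (a + (1 - x))⁻¹ * connector x (a + 1) (b + 1) + (b + 1 : ℝ≥0)⁻¹ * connector x (a + 1) (b + 1) =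
      (b + 1 : ℝ≥0)⁻¹ * connector x a (b + 1) := by
  have hy := tsub_pos_of_lt hx
  rw [connector_comm x (a + 1), connector_succ_right hx, connector_comm x a]
  push_cast
  field_simp
  ring

theorem tsum_inv_sub_mul_connector (m b : ℕ) :
    ∑' j : ℕ, (((m + j + 1 : ℕ) : ℝ≥0∞) - x)⁻¹ * connector x (m + j + 1) (b + 1) =
      ((b + 1 : ℕ) : ℝ≥0∞)⁻¹ * connector x m (b + 1) := by
  have hterm : ∀ j : ℕ, (((m + j + 1 : ℕ) : ℝ≥0∞) - x)⁻¹ * connector x (m + j + 1) (b + 1) =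
      (((m + j : ℕ) + (1 - x))⁻¹ * connector x (m + j + 1) (b + 1) : ℝ≥0) := by
    intro j
    have hne : ((m + j : ℕ) + (1 - x) : ℝ≥0) ≠ 0 := (add_pos_of_nonneg_of_pos zero_le
      (tsub_pos_of_lt hx)).ne'
    rw [ENNReal.coe_mul, ENNReal.coe_inv hne, ← add_tsub_assoc_of_le hx.le, ENNReal.coe_sub]
    norm_cast
  have hrhs : ((b + 1 : ℕ) : ℝ≥0∞)⁻¹ * connector x m (b + 1) =
      ((b + 1 : ℝ≥0)⁻¹ * connector x m (b + 1) : ℝ≥0) := by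
    rw [ENNReal.coe_mul, ENNReal.coe_inv (by positivity)]
    push_cast
    rfl
  have hlim : Tendsto (fun j => (((b + 1 : ℝ≥0)⁻¹ * connector x (m + j) (b + 1) : ℝ≥0) : ℝ≥0∞))
      atTop (𝓝 0) := by
    have hshift : Tendsto (fun j => m + j) atTop atTop :=
      tendsto_atTop_mono (Nat.le_add_left · m) tendsto_id
    rw [← ENNReal.coe_zero, ENNReal.tendsto_coe, ← mul_zero (b + 1 : ℝ≥0)⁻¹]
    exact ((tendsto_connector_succ_right hx b).comp hshift).const_mul _
  simp only [hterm, hrhs]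
  refine tsum_eq_of_add_succ_eq ENNReal.summable hlim fun j => ?_
  exact_mod_cast connector_telescope hx (m + j) b

theorem inv_eq_tsum_connector {a : ℕ} (ha : a ≠ 0) :
    (a : ℝ≥0∞)⁻¹ = ∑' b : ℕ, (((b + 1 : ℕ) : ℝ≥0∞) - x)⁻¹ * connector x a (b + 1) := by
  obtain ⟨m, rfl⟩ := Nat.exists_eq_succ_of_ne_zero ha
  have := tsum_inv_sub_mul_connector hx 0 m
  simp only [zero_add, connector_comm x _ (m + 1), connector_zero_right hx, ENNReal.coe_one,
    mul_one] at this
  exact this.symm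

end Connector

section PartialSum

theorem PS_snoc_of_le {n : ℕ} (p : Fin n → ℕ) (a : ℕ) {j : ℕ} (hj : j ≤ n) :
    PS (Fin.snoc p a : Fin (n + 1) → ℕ) j = PS p j := by
  simp [PS, sum_filter, Fin.sum_univ_castSucc, hj]

theorem PS_snoc_last {n : ℕ} (p : Fin n → ℕ) (a : ℕ) :
    PS (Fin.snoc p a : Fin (n + 1) → ℕ) (n + 1) = PS p n + a + 1 := by
  simp [PS, sum_filter, Fin.sum_univ_castSucc, add_assoc]

theorem PS_succ_ne_zero {n : ℕ} (p : Fin n → ℕ) (i : Fin n) : PS p (i + 1) ≠ 0 := by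
  have : p i + 1 ≤ PS p (i + 1) :=
    single_le_sum (f := fun j => p j + 1) (fun _ _ => Nat.zero_le _) (by simp)
  omega

end PartialSum

section GeneratingFunction

theorem tsum_prod_inv_sub_mul_connector {x : ℝ≥0} (hx : x < 1) (n b : ℕ) :
    ∑' p : Fin n → ℕ, (∏ i : Fin n, ((PS p (i + 1) : ℝ≥0∞) - x)⁻¹) * connector x (PS p n) (b + 1) =
      ((b + 1 : ℕ) : ℝ≥0∞)⁻¹ ^ n := by
  induction n with
  | zero => simp [PS, connector_comm x 0, connector_zero_right hx]
  | succ n ih =>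
    rw [tsum_fin_snoc, pow_succ, ← ih, ← ENNReal.tsum_mul_right]
    refine tsum_congr fun p => ?_
    have hprefix : ∀ (a : ℕ) (i : Fin n),
        PS (Fin.snoc p a : Fin (n + 1) → ℕ) (i + 1) = PS p (i + 1) :=
      fun a i => PS_snoc_of_le p a (by omega)
    simp only [Fin.prod_univ_castSucc, Fin.val_castSucc, Fin.val_last, hprefix, PS_snoc_last,
      mul_assoc, ENNReal.tsum_mul_left]
    rw [tsum_inv_sub_mul_connector hx, mul_comm (connector _ _ _ : ℝ≥0∞)]

theorem tsum_prod_inv_sub_mul_inv {x : ℝ≥0} (hx : x < 1) (n : ℕ) :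
    ∑' p : Fin (n + 1) → ℕ,
        (∏ i : Fin (n + 1), ((PS p (i + 1) : ℝ≥0∞) - x)⁻¹) * (PS p (n + 1) : ℝ≥0∞)⁻¹ =
      ∑' m : ℕ, (((m + 1 : ℕ) : ℝ≥0∞) - x)⁻¹ * ((m + 1 : ℕ) : ℝ≥0∞)⁻¹ ^ (n + 1) := by
  have hlast : ∀ p : Fin (n + 1) → ℕ, PS p (n + 1) ≠ 0 := fun p => PS_succ_ne_zero p (Fin.last n)
  simp only [inv_eq_tsum_connector hx (hlast _), ← ENNReal.tsum_mul_left]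
  rw [ENNReal.tsum_comm]
  refine tsum_congr fun m => ?_
  rw [← tsum_prod_inv_sub_mul_connector hx, ← ENNReal.tsum_mul_left]
  exact tsum_congr fun p => mul_left_comm _ _ _

/-- The multiple zeta value `ζ(k₁,…,kₙ)` as an extended nonnegative real, so that rearranging the
defining series needs no convergence argument. -/
noncomputable def mzv {n : ℕ} (kv : Fin n → ℕ) : ℝ≥0∞ :=
  ∑' p : Fin n → ℕ, ∏ i : Fin n, (PS p (i + 1) : ℝ≥0∞)⁻¹ ^ kv i

/-- The admissible index `(1,…,1,2)`: the least one of depth `n + 1`, so the admissible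
indices of that depth are its translates by tuples of natural numbers. -/
def minIndex (n : ℕ) : Fin (n + 1) → ℕ :=
  1 + Pi.single (Fin.last n) 1

theorem sum_minIndex (n : ℕ) : ∑ i, minIndex n i = n + 2 := by
  simp [minIndex, sum_add_distrib]

theorem minIndex_le_iff {n : ℕ} {kv : Fin (n + 1) → ℕ} :
    minIndex n ≤ kv ↔ (∀ i, 1 ≤ kv i) ∧ 2 ≤ kv (Fin.last n) := by
  simp only [Pi.le_def, Fin.forall_fin_succ', minIndex, Pi.add_apply, Pi.one_apply,
    Pi.single_eq_same, Pi.single_eq_of_ne (Fin.castSucc_ne_last _)]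
  exact ⟨fun h => ⟨⟨h.1, by omega⟩, h.2⟩, fun h => ⟨h.1.1, h.2⟩⟩

theorem mem_Ikr_one_iff {n k : ℕ} {kv : Fin (n + 1) → ℕ} :
    kv ∈ Ikr (n + 1) k 1 ↔ minIndex n ≤ kv ∧ ∑ i, kv i = k := by
  have hrange : ∑ i, kv i = k → ∀ i, kv i < k + 1 := by
    rintro rfl i
    exact Nat.lt_succ_of_le (single_le_sum (fun _ _ => Nat.zero_le _) (mem_univ i))
  have hlast : (∀ i : Fin (n + 1), (i : ℕ) = n + 1 - 1 → 2 ≤ kv i) ↔ 2 ≤ kv (Fin.last n) :=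
    ⟨fun h => h _ rfl, fun h i hi => (Fin.ext hi : i = Fin.last n) ▸ h⟩
  have hones : ∀ i : Fin (n + 1), (i : ℕ) + 2 ≤ 1 → kv i = 1 := fun i hi => by omega
  simp only [Ikr, mem_filter, Fintype.mem_piFinset, mem_range, hlast, minIndex_le_iff]
  tauto

theorem Ikr_one_eq_map (n d : ℕ) :
    Ikr (n + 1) (d + (n + 2)) 1 =
      (piAntidiag univ d).map (addRightEmbedding (minIndex n)) := by
  ext kv
  simp only [mem_Ikr_one_iff, Finset.mem_map, mem_piAntidiag, addRightEmbedding_apply]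
  constructor
  · rintro ⟨hle, hsum⟩
    refine ⟨kv - minIndex n, ⟨?_, by simp⟩, tsub_add_cancel_of_le hle⟩
    have : ∑ i, (kv - minIndex n) i + ∑ i, minIndex n i = ∑ i, kv i := by
      rw [← sum_add_distrib]
      exact sum_congr rfl fun i _ => tsub_add_cancel_of_le (hle i)
    rw [sum_minIndex, hsum] at this
    exact Nat.add_right_cancel this
  · rintro ⟨e, ⟨rfl, -⟩, rfl⟩
    exact ⟨le_add_self, by simp [sum_add_distrib, sum_minIndex]⟩

theorem prod_inv_sub_mul_inv_eq_tsum {n : ℕ} {c : Fin (n + 1) → ℝ≥0∞} (hc0 : ∀ i, c i ≠ 0)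
    (hc : ∀ i, c i ≠ ∞) (x : ℝ≥0∞) :
    (∏ i, (c i - x)⁻¹) * (c (Fin.last n))⁻¹ =
      ∑' e : Fin (n + 1) → ℕ, x ^ (∑ i, e i) * ∏ i, (c i)⁻¹ ^ (e + minIndex n) i := by
  have hlast : (c (Fin.last n))⁻¹ =
      ∏ i, (c i)⁻¹ ^ (Pi.single (Fin.last n) 1 : Fin (n + 1) → ℕ) i := by
    simp [Fin.prod_univ_castSucc]
  simp only [inv_sub_eq_tsum (hc0 _) (hc _) x, prod_tsum_eq_tsum_prod, ← ENNReal.tsum_mul_right]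
  refine tsum_congr fun e => ?_
  simp only [hlast, minIndex, Pi.add_apply, Pi.one_apply, pow_add, prod_mul_distrib,
    prod_pow_eq_pow_sum, mul_assoc]

theorem tsum_prod_inv_sub_mul_inv_eq_tsum_mzv (n : ℕ) (x : ℝ≥0∞) :
    ∑' p : Fin (n + 1) → ℕ,
        (∏ i : Fin (n + 1), ((PS p (i + 1) : ℝ≥0∞) - x)⁻¹) * (PS p (n + 1) : ℝ≥0∞)⁻¹ =
      ∑' d : ℕ, x ^ d * ∑ kv ∈ Ikr (n + 1) (d + (n + 2)) 1, mzv kv := by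
  have hexpand : ∀ p : Fin (n + 1) → ℕ,
      (∏ i : Fin (n + 1), ((PS p (i + 1) : ℝ≥0∞) - x)⁻¹) * (PS p (n + 1) : ℝ≥0∞)⁻¹ =
        ∑' e : Fin (n + 1) → ℕ,
          x ^ (∑ i, e i) * ∏ i : Fin (n + 1), (PS p (i + 1) : ℝ≥0∞)⁻¹ ^ (e + minIndex n) i :=
    fun p => prod_inv_sub_mul_inv_eq_tsum
      (fun i => Nat.cast_ne_zero.2 (PS_succ_ne_zero p i)) (fun i => ENNReal.natCast_ne_top _) x
  simp only [hexpand]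
  rw [ENNReal.tsum_comm, tsum_eq_tsum_sum_piAntidiag]
  refine tsum_congr fun d => ?_
  rw [Ikr_one_eq_map, sum_map, mul_sum]
  refine sum_congr rfl fun e he => ?_
  rw [ENNReal.tsum_mul_left, (mem_piAntidiag.1 he).1, mzv, addRightEmbedding_apply]

theorem tsum_inv_sub_mul_pow_eq_tsum_zeta (n : ℕ) (x : ℝ≥0∞) :
    ∑' m : ℕ, (((m + 1 : ℕ) : ℝ≥0∞) - x)⁻¹ * ((m + 1 : ℕ) : ℝ≥0∞)⁻¹ ^ (n + 1) =
      ∑' d : ℕ, x ^ d * ∑' m : ℕ, ((m + 1 : ℕ) : ℝ≥0∞)⁻¹ ^ (d + (n + 2)) := by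
  simp only [← ENNReal.tsum_mul_left]
  rw [ENNReal.tsum_comm]
  refine tsum_congr fun m => ?_
  rw [inv_sub_eq_tsum (by simp) (ENNReal.natCast_ne_top _), ← ENNReal.tsum_mul_right]
  exact tsum_congr fun d => by ring

end GeneratingFunction

section SumFormula

theorem tsum_inv_pow_ne_top {k : ℕ} (hk : 2 ≤ k) :
    ∑' m : ℕ, ((m + 1 : ℕ) : ℝ≥0∞)⁻¹ ^ k ≠ ∞ := by
  have hsummable : Summable fun m : ℕ => (((m + 1 : ℕ) : ℝ≥0) ^ k)⁻¹ := by
    rw [NNReal.summable_nat_add_iff (f := fun m : ℕ => ((m : ℝ≥0) ^ k)⁻¹) 1, ← NNReal.summable_coe]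
    simpa only [NNReal.coe_inv, NNReal.coe_pow, NNReal.coe_natCast] using
      Real.summable_nat_pow_inv.2 hk
  convert ENNReal.tsum_coe_ne_top_iff_summable.2 hsummable with m
  rw [ENNReal.coe_inv (by positivity), ENNReal.coe_pow, ENNReal.coe_natCast, ENNReal.inv_pow]

theorem tsum_pow_mul_zeta_ne_top {x : ℝ≥0∞} (hx : x < 1) (n : ℕ) :
    ∑' d : ℕ, x ^ d * ∑' m : ℕ, ((m + 1 : ℕ) : ℝ≥0∞)⁻¹ ^ (d + (n + 2)) ≠ ∞ := by
  have hle : ∀ d : ℕ, ∑' m : ℕ, ((m + 1 : ℕ) : ℝ≥0∞)⁻¹ ^ (d + (n + 2)) ≤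
      ∑' m : ℕ, ((m + 1 : ℕ) : ℝ≥0∞)⁻¹ ^ 2 := fun d =>
    ENNReal.tsum_le_tsum fun m => pow_le_pow_right_of_le_one' (by simp) (by omega)
  refine ne_top_of_le_ne_top ?_ (ENNReal.tsum_le_tsum fun d => mul_le_mul_right (hle d) _)
  rw [ENNReal.tsum_mul_right, ENNReal.tsum_geometric]
  exact ENNReal.mul_ne_top (ENNReal.inv_ne_top.2 (tsub_pos_of_lt hx).ne')
    (tsum_inv_pow_ne_top le_rfl)

theorem sum_mzv_Ikr_one (n d : ℕ) :
    ∑ kv ∈ Ikr (n + 1) (d + (n + 2)) 1, mzv kv =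
      ∑' m : ℕ, ((m + 1 : ℕ) : ℝ≥0∞)⁻¹ ^ (d + (n + 2)) := by
  have hlt : ∀ᶠ x in 𝓝[>] (0 : ℝ≥0∞), x < 1 :=
    eventually_nhdsWithin_of_eventually_nhds (gt_mem_nhds one_pos)
  refine congr_fun (eq_of_eventually_tsum_pow_mul_eq
    (a := fun d => ∑ kv ∈ Ikr (n + 1) (d + (n + 2)) 1, mzv kv)
    (b := fun d => ∑' m : ℕ, ((m + 1 : ℕ) : ℝ≥0∞)⁻¹ ^ (d + (n + 2))) ?_ ?_) d
  · exact hlt.mono fun x hx => tsum_pow_mul_zeta_ne_top hx n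
  · filter_upwards [hlt] with x hx
    lift x to ℝ≥0 using hx.ne_top
    rw [← tsum_prod_inv_sub_mul_inv_eq_tsum_mzv, ← tsum_inv_sub_mul_pow_eq_tsum_zeta,
      tsum_prod_inv_sub_mul_inv (by exact_mod_cast hx)]

theorem toReal_mzv {n : ℕ} (kv : Fin n → ℕ) :
    (mzv kv).toReal = ∑' p : Fin n → ℕ, (∏ i : Fin n, (PS p (i + 1) : ℝ) ^ kv i)⁻¹ := by
  have hne_top : ∀ p : Fin n → ℕ, ∏ i : Fin n, (PS p (i + 1) : ℝ≥0∞)⁻¹ ^ kv i ≠ ∞ := fun p =>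
    ENNReal.prod_ne_top fun i _ => ENNReal.pow_ne_top <|
      ENNReal.inv_ne_top.2 (Nat.cast_ne_zero.2 (PS_succ_ne_zero p i))
  rw [mzv, ENNReal.tsum_toReal_eq hne_top]
  simp [ENNReal.toReal_prod]

theorem toReal_tsum_inv_pow (k : ℕ) :
    (∑' m : ℕ, ((m + 1 : ℕ) : ℝ≥0∞)⁻¹ ^ k).toReal = ∑' m : ℕ, (((m + 1 : ℕ) : ℝ) ^ k)⁻¹ := by
  rw [ENNReal.tsum_toReal_eq fun m => ENNReal.pow_ne_top (by simp)]
  simp only [ENNReal.toReal_pow, ENNReal.toReal_inv, ENNReal.toReal_natCast, inv_pow]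

end SumFormula

/-- The sum formula for multiple zeta-values: the sum of `ζ(𝐤)` over all admissible
indices `𝐤` of weight `k` and depth `n` equals `ζ(k)`. -/
theorem sum_formula_MZV (n k : ℕ) (hn : 1 ≤ n) (hk : n + 1 ≤ k) :
    ∑ kv ∈ Ikr n k 1,
      ∑' mv : Fin n → ℕ, (∏ i : Fin n, ((PS mv ((i : ℕ) + 1) : ℕ) : ℝ) ^ kv i)⁻¹
    = ∑' m : ℕ, (((m + 1 : ℕ) : ℝ) ^ k)⁻¹ := by
  obtain ⟨N, rfl⟩ := Nat.exists_eq_add_of_le' hn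
  obtain ⟨d, rfl⟩ := Nat.exists_eq_add_of_le' hk
  have hsum : ∑ kv ∈ Ikr (N + 1) (d + (N + 2)) 1, mzv kv ≠ ∞ := by
    rw [sum_mzv_Ikr_one]
    exact tsum_inv_pow_ne_top (by omega)
  rw [← toReal_tsum_inv_pow, ← sum_mzv_Ikr_one, ENNReal.toReal_sum (ENNReal.sum_ne_top.1 hsum)]
  exact sum_congr rfl fun kv _ => (toReal_mzv kv).symm
end
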